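/- Let A be a self-adjoint operator on a separable Hilbert space H. Then there exists a sequence P_n of finite rank orthogonal projections such that: (i) P_n → I strongly; (ii) Ran P_n ⊆ Dom A for all n; (iii) for every f ∈ Dom A, ‖P_n A P_n f − A f‖ → 0 as n → ∞. -/

import Mathlib

open scoped InnerProductSpace

/-!
Give `Dom A` the graph norm, so that it is a Hilbert space `G` with a bounded dense injection
`T : G → E` and `A` becomes bounded on `G`. If `P` is the orthogonal projection to `T W`, then
`P T x = T y` with `y` the Galerkin approximation of `x` from `W`, so it suffices to find
finite-dimensional `W n` increasing to a dense subspace of `G` for which these approximations are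
bounded in the norm of `G` uniformly in `n`. Spectral subspaces of `T† T` for geometrically
shrinking intervals split `G` into orthogonal pieces with orthogonal images, on each of which `T`
is a multiple of an isometry up to a factor `2`. For `W` spanned by subspaces of finitely many
pieces, the Galerkin approximation can be computed piecewise, where it is bounded by the distortion.
-/

open Filter Topology ContinuousLinearMap

section InnerProduct

variable {𝕜 G H ι : Type*} [RCLike 𝕜] [NormedAddCommGroup G] [InnerProductSpace 𝕜 G]
  [NormedAddCommGroup H] [InnerProductSpace 𝕜 H]

lemma sum_norm_sq_starProjection_le {E : ι → Submodule 𝕜 G} [∀ k, (E k).HasOrthogonalProjection]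
    (hE : Pairwise fun k l => E k ⟂ E l) (s : Finset ι) (x : G) :
    ∑ k ∈ s, ‖(E k).starProjection x‖ ^ 2 ≤ ‖x‖ ^ 2 := by
  set z := ∑ k ∈ s, (E k).starProjection x
  have hz : ‖z‖ ^ 2 = ∑ k ∈ s, ‖(E k).starProjection x‖ ^ 2 :=
    (OrthogonalFamily.of_pairwise hE).norm_sum (fun k => (E k).orthogonalProjectionOnto x) s
  have hinner : ‖z‖ ^ 2 = RCLike.re ⟪z, x⟫_𝕜 := by
    rw [hz, sum_inner, map_sum]
    exact Finset.sum_congr rfl fun k _ => (Submodule.re_inner_starProjection_eq_normSq _ x).symm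
  have hzx : ‖z‖ ^ 2 ≤ ‖z‖ * ‖x‖ := hinner.trans_le (re_inner_le_norm z x)
  rw [← hz]
  nlinarith [sq_nonneg (‖z‖ - ‖x‖)]

lemma tendsto_starProjection_apply {V : ℕ → Submodule 𝕜 G} [∀ n, (V n).HasOrthogonalProjection]
    {g : G} (hV : Tendsto (fun n => (V n).starProjection g) atTop (𝓝 g)) {u : ℕ → G}
    (hu : Tendsto u atTop (𝓝 g)) : Tendsto (fun n => (V n).starProjection (u n)) atTop (𝓝 g) := by
  have hdiff : Tendsto (fun n => (V n).starProjection (u n - g)) atTop (𝓝 0) :=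
    squeeze_zero_norm (fun n => Submodule.norm_starProjection_apply_le _ _)
      (tendsto_iff_norm_sub_tendsto_zero.1 hu)
  simpa using hdiff.add hV

lemma exists_monotone_finiteDimensional_dense (K M : Type*) [DivisionRing K] [AddCommGroup M]
    [Module K M] [TopologicalSpace M] [TopologicalSpace.SeparableSpace M] :
    ∃ D : ℕ → Submodule K M, (∀ n, FiniteDimensional K (D n)) ∧ Monotone D ∧
      Dense ((⨆ n, D n : Submodule K M) : Set M) := by
  refine ⟨fun n => Submodule.span K (TopologicalSpace.denseSeq M '' Set.Iic n),
    fun n => .span_of_finite K ((Set.finite_Iic n).image _),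
    fun m n hmn => Submodule.span_mono (Set.image_mono (Set.Iic_subset_Iic.2 hmn)),
    (TopologicalSpace.denseRange_denseSeq M).mono ?_⟩
  rintro _ ⟨n, rfl⟩
  exact Submodule.mem_iSup_of_mem n (Submodule.subset_span ⟨n, Set.self_mem_Iic, rfl⟩)

lemma separableSpace_of_injective_clm [CompleteSpace G] [CompleteSpace H]
    [TopologicalSpace.SeparableSpace H] {T : G →L[𝕜] H} (hT : Function.Injective T) :
    TopologicalSpace.SeparableSpace G := by
  have hker : T.ker = ⊥ := LinearMap.ker_eq_bot.2 hT
  have hdense : DenseRange T.adjoint := by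
    have h := T.orthogonal_ker
    rw [hker, Submodule.bot_orthogonal_eq_top] at h
    exact Submodule.dense_iff_topologicalClosure_eq_top.2 h.symm
  exact hdense.separableSpace T.adjoint.continuous

lemma orthogonal_iSup_inf_orthogonal_succ_le_iInf {M : ℕ → Submodule 𝕜 G}
    [∀ k, (M k).HasOrthogonalProjection] (hM : Antitone M) (hM₀ : M 0 = ⊤) :
    (⨆ k, (M (k + 1))ᗮ ⊓ M k)ᗮ ≤ ⨅ k, M k := by
  intro x hx
  rw [← Submodule.iInf_orthogonal, Submodule.mem_iInf] at hx
  refine Submodule.mem_iInf _ |>.2 fun k => ?_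
  induction k with
  | zero => exact hM₀ ▸ Submodule.mem_top
  | succ k hxk =>
    obtain ⟨u, hu, e, he, rfl⟩ := Submodule.mem_sup.1 <|
      (Submodule.sup_orthogonal_inf_of_hasOrthogonalProjection (hM k.le_succ)).symm ▸ hxk
    have he₀ : ⟪e, e⟫_𝕜 = 0 := by
      simpa [inner_add_right, Submodule.inner_left_of_mem_orthogonal hu he.1] using hx k e he
    rwa [inner_self_eq_zero.1 he₀, add_zero]

/-- The span of the projections of `D n` to the first `n` summands `E k`. When `D` exhausts the
space, so does this truncation, and it splits along the summands. -/
noncomputable def blockSpace (E : ℕ → Submodule 𝕜 G) [∀ k, (E k).HasOrthogonalProjection]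
    (D : ℕ → Submodule 𝕜 G) (n : ℕ) : Submodule 𝕜 G :=
  ⨆ k ∈ Finset.range n, (D n).map ((E k).starProjection : G →ₗ[𝕜] G)

section blockSpace

variable {E D : ℕ → Submodule 𝕜 G} [∀ k, (E k).HasOrthogonalProjection]

instance finiteDimensional_blockSpace (n : ℕ) [FiniteDimensional 𝕜 (D n)] :
    FiniteDimensional 𝕜 (blockSpace E D n) := by
  rw [blockSpace, ← Finset.sup_eq_iSup]
  infer_instance

lemma blockSpace_mono (hD : Monotone D) : Monotone (blockSpace E D) := fun _ _ hmn =>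
  biSup_mono (fun _ hk => Finset.range_mono hmn hk) |>.trans
    (iSup₂_mono fun _ _ => Submodule.map_mono (hD hmn))

lemma dense_iSup_blockSpace [CompleteSpace G] (hD : Monotone D)
    (hDdense : Dense ((⨆ n, D n : Submodule 𝕜 G) : Set G)) (hE : (⨆ k, E k)ᗮ = ⊥) :
    (⨆ n, blockSpace E D n).topologicalClosure = ⊤ := by
  rw [Submodule.topologicalClosure_eq_top_iff, eq_bot_iff, ← hE,
    ← Submodule.iInf_orthogonal E]
  refine fun x hx => (Submodule.mem_iInf _).2 fun k => ?_
  rw [← Submodule.starProjection_apply_eq_zero_iff]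
  refine hDdense.eq_zero_of_inner_right 𝕜 fun d hd => ?_
  obtain ⟨i, hi⟩ := (Submodule.mem_iSup_of_directed D hD.directed_le).1 hd
  rw [← Submodule.inner_starProjection_left_eq_right]
  refine hx _ (Submodule.mem_iSup_of_mem (max i (k + 1)) ?_)
  exact Submodule.mem_iSup_of_mem k <| Submodule.mem_iSup_of_mem (by simp) <|
    Submodule.mem_map_of_mem (hD (le_max_left _ _) hi)

end blockSpace

/-- Galerkin orthogonality: `y` approximates `x` from `W` in the sense that `T y` is the orthogonal
projection of `T x` to `T W`. Stating it through inner products avoids asking `T W` to be closed. -/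
structure IsGalerkinApprox (T : G →L[𝕜] H) (W : Submodule 𝕜 G) (x y : G) : Prop where
  mem : y ∈ W
  inner_eq_zero : ∀ z ∈ W, ⟪T z, T x - T y⟫_𝕜 = 0

namespace IsGalerkinApprox

variable {T : G →L[𝕜] H} {W : Submodule 𝕜 G} {x y x' y' : G}

lemma refl (hx : x ∈ W) : IsGalerkinApprox T W x x :=
  ⟨hx, fun z _ => by rw [sub_self, inner_zero_right]⟩

lemma sub (h : IsGalerkinApprox T W x y) (h' : IsGalerkinApprox T W x' y') :
    IsGalerkinApprox T W (x - x') (y - y') :=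
  ⟨W.sub_mem h.mem h'.mem, fun z hz => by
    rw [map_sub, map_sub, sub_sub_sub_comm, inner_sub_right, h.inner_eq_zero z hz,
      h'.inner_eq_zero z hz, sub_zero]⟩

lemma tendsto {W : ℕ → Submodule 𝕜 G} (hW : Monotone W)
    (hdense : (⨆ n, W n).topologicalClosure = ⊤) {C : ℝ}
    (hstable : ∀ n x y, IsGalerkinApprox T (W n) x y → ‖y‖ ≤ C * ‖x‖) {y : ℕ → G}
    (hy : ∀ n, IsGalerkinApprox T (W n) x (y n)) : Tendsto y atTop (𝓝 x) := by
  have hcont : Tendsto (fun u => C * ‖x - u‖ + ‖x - u‖) (𝓝 x) (𝓝 0) :=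
    Continuous.tendsto' (by fun_prop) x 0 (by simp)
  refine Metric.tendsto_atTop.2 fun ε hε => ?_
  have hx : x ∈ closure ((⨆ n, W n : Submodule 𝕜 G) : Set G) :=
    Submodule.dense_iff_topologicalClosure_eq_top.2 hdense x
  obtain ⟨u, hu, huε⟩ := ((mem_closure_iff_frequently.1 hx).and_eventually
    (hcont.eventually_lt_const hε)).exists
  obtain ⟨N, huN⟩ := (Submodule.mem_iSup_of_directed W hW.directed_le).1 hu
  refine ⟨N, fun n hn => ?_⟩
  calc dist (y n) x = ‖(y n - u) - (x - u)‖ := by rw [sub_sub_sub_cancel_right, dist_eq_norm]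
    _ ≤ ‖y n - u‖ + ‖x - u‖ := norm_sub_le _ _
    _ ≤ C * ‖x - u‖ + ‖x - u‖ := by
        gcongr
        exact hstable n _ _ ((hy n).sub (refl (hW hn huN)))
    _ < ε := huε

lemma exists_map_eq_starProjection (T : G →L[𝕜] H) (W : Submodule 𝕜 G) [FiniteDimensional 𝕜 W]
    (x : G) :
    ∃ y, IsGalerkinApprox T W x y ∧ T y = (W.map (T : G →ₗ[𝕜] H)).starProjection (T x) := by
  obtain ⟨y, hy, hTy⟩ := Submodule.starProjection_apply_mem (W.map (T : G →ₗ[𝕜] H)) (T x)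
  rw [ContinuousLinearMap.coe_coe] at hTy
  refine ⟨y, ⟨hy, fun z hz => ?_⟩, hTy⟩
  rw [hTy]
  exact Submodule.sub_starProjection_mem_orthogonal (T x) _ (Submodule.mem_map_of_mem hz)

end IsGalerkinApprox

/-- The mutually orthogonal subspaces `E k` reduce `T† T`, and on each of them `T` is a multiple of
an isometry up to the factor `C`, which does not depend on `k`. Reduction is encoded by `T` mapping
`E k` and its complement to orthogonal subspaces, which does not need the adjoint. -/
structure HasBoundedDistortion (T : G →L[𝕜] H) (C : ℝ) (E : ι → Submodule 𝕜 G) : Prop where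
  pairwise_isOrtho : Pairwise fun k l => E k ⟂ E l
  inner_map_map_eq_zero : ∀ k, ∀ x ∈ E k, ∀ y ∈ (E k)ᗮ, ⟪T x, T y⟫_𝕜 = 0
  exists_bounds : ∀ k, ∃ r > 0, ∀ x ∈ E k, r * ‖x‖ ≤ ‖T x‖ ∧ ‖T x‖ ≤ C * (r * ‖x‖)

namespace HasBoundedDistortion

variable {T : G →L[𝕜] H} {C : ℝ} {E : ι → Submodule 𝕜 G}

lemma isGalerkinApprox_summand (hE : HasBoundedDistortion T C E) {F : ι → Submodule 𝕜 G}
    (hF : ∀ k, F k ≤ E k) {s : Finset ι} {x : G} {u : ∀ k, F k}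
    (hu : IsGalerkinApprox T (⨆ k ∈ s, F k) x (∑ k ∈ s, (u k : G))) {k : ι} (hk : k ∈ s) :
    IsGalerkinApprox T (F k) x (u k) := by
  classical
  refine ⟨(u k).2, fun z hz => ?_⟩
  have hothers : ∑ l ∈ s, (u l : G) - u k ∈ (E k)ᗮ := by
    rw [← Finset.sum_erase_eq_sub hk]
    exact Submodule.sum_mem _ fun l hl =>
      hE.pairwise_isOrtho (Finset.ne_of_mem_erase hl) (hF l (u l).2)
  have hsum := hu.inner_eq_zero z (Submodule.mem_iSup_of_mem k (Submodule.mem_iSup_of_mem hk hz))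
  have hdiff := hE.inner_map_map_eq_zero k z (hF k hz) _ hothers
  rw [map_sub] at hdiff
  rw [← sub_add_sub_cancel (T x) (T (∑ l ∈ s, (u l : G))), inner_add_right, hsum, hdiff, add_zero]

variable [∀ k, (E k).HasOrthogonalProjection]

lemma norm_le_starProjection (hE : HasBoundedDistortion T C E) {k : ι} {F : Submodule 𝕜 G}
    (hF : F ≤ E k) {x u : G} (hu : IsGalerkinApprox T F x u) :
    ‖u‖ ≤ C * ‖(E k).starProjection x‖ := by
  set p := (E k).starProjection x
  have hTu : ⟪T u, T u⟫_𝕜 = ⟪T u, T p⟫_𝕜 := by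
    have hortho := hu.inner_eq_zero u hu.mem
    have hperp := hE.inner_map_map_eq_zero k u (hF hu.mem) (x - p)
      (Submodule.sub_starProjection_mem_orthogonal x)
    rw [inner_sub_right, sub_eq_zero] at hortho
    rw [map_sub, inner_sub_right, sub_eq_zero] at hperp
    rw [← hortho, hperp]
  have hTup : ‖T u‖ ≤ ‖T p‖ := by
    have hmul : ‖T u‖ * ‖T u‖ ≤ ‖T u‖ * ‖T p‖ := by
      rw [← inner_self_eq_norm_mul_norm (𝕜 := 𝕜), hTu]
      exact re_inner_le_norm _ _
    nlinarith [norm_nonneg (T u), norm_nonneg (T p)]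
  obtain ⟨r, hr, hbounds⟩ := hE.exists_bounds k
  refine le_of_mul_le_mul_left ?_ hr
  calc r * ‖u‖ ≤ ‖T u‖ := (hbounds u (hF hu.mem)).1
    _ ≤ ‖T p‖ := hTup
    _ ≤ C * (r * ‖p‖) := (hbounds p (Submodule.starProjection_apply_mem _ x)).2
    _ = r * (C * ‖p‖) := by ring

lemma norm_le_of_isGalerkinApprox (hE : HasBoundedDistortion T C E) (hC : 0 ≤ C)
    {F : ι → Submodule 𝕜 G} (hF : ∀ k, F k ≤ E k) {s : Finset ι} {x y : G}
    (hy : IsGalerkinApprox T (⨆ k ∈ s, F k) x y) : ‖y‖ ≤ C * ‖x‖ := by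
  obtain ⟨u, rfl⟩ := (Submodule.mem_iSup_finset_iff_exists_sum F y).1 hy.mem
  apply le_of_sq_le_sq _ (by positivity)
  calc ‖∑ k ∈ s, (u k : G)‖ ^ 2 = ∑ k ∈ s, ‖(u k : G)‖ ^ 2 :=
        (OrthogonalFamily.of_pairwise hE.pairwise_isOrtho).norm_sum
          (fun k => ⟨u k, hF k (u k).2⟩) s
    _ ≤ ∑ k ∈ s, (C * ‖(E k).starProjection x‖) ^ 2 := by
        gcongr with k hk
        exact hE.norm_le_starProjection (hF k) (hE.isGalerkinApprox_summand hF hy hk)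
    _ = C ^ 2 * ∑ k ∈ s, ‖(E k).starProjection x‖ ^ 2 := by
        simp only [mul_pow, Finset.mul_sum]
    _ ≤ C ^ 2 * ‖x‖ ^ 2 := by
        gcongr
        exact sum_norm_sq_starProjection_le hE.pairwise_isOrtho s x
    _ = (C * ‖x‖) ^ 2 := (mul_pow _ _ _).symm

lemma tendsto_of_isGalerkinApprox [CompleteSpace G] {E D : ℕ → Submodule 𝕜 G}
    [∀ k, (E k).HasOrthogonalProjection] (hE : HasBoundedDistortion T C E) (hC : 0 ≤ C)
    (hEtotal : (⨆ k, E k)ᗮ = ⊥) (hD : Monotone D)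
    (hDdense : Dense ((⨆ n, D n : Submodule 𝕜 G) : Set G)) {x : G} {y : ℕ → G}
    (hy : ∀ n, IsGalerkinApprox T (blockSpace E D n) x (y n)) : Tendsto y atTop (𝓝 x) := by
  refine IsGalerkinApprox.tendsto (blockSpace_mono hD) (dense_iSup_blockSpace hD hDdense hEtotal)
    (fun n x y hxy => hE.norm_le_of_isGalerkinApprox hC (fun k => ?_) hxy) hy
  rintro _ ⟨d, -, rfl⟩
  exact Submodule.starProjection_apply_mem _ d

end HasBoundedDistortion
end InnerProduct

section SpectralBands

variable {G : Type*} [NormedAddCommGroup G] [InnerProductSpace ℂ G] [CompleteSpace G]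

/-- The spectral subspace of a self-adjoint operator `S` for the half-line `(-∞, l]`. Taking the
kernel of the positive part of `S - l` requires only the continuous functional calculus. -/
noncomputable def spectralSublevel (S : G →L[ℂ] G) (l : ℝ) : Submodule ℂ G :=
  ((S - l • 1)⁺).ker

lemma isClosed_spectralSublevel (S : G →L[ℂ] G) (l : ℝ) :
    IsClosed (spectralSublevel S l : Set G) :=
  ContinuousLinearMap.isClosed_ker _

instance hasOrthogonalProjection_spectralSublevel (S : G →L[ℂ] G) (l : ℝ) :
    (spectralSublevel S l).HasOrthogonalProjection :=
  have := (isClosed_spectralSublevel S l).completeSpace_coe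
  inferInstance

lemma map_mem_spectralSublevel_of_commute {S R : G →L[ℂ] G} (hR : Commute S R) {l : ℝ} {x : G}
    (hx : x ∈ spectralSublevel S l) : R x ∈ spectralSublevel S l := by
  have hcomm : Commute (S - l • 1)⁺ R :=
    (hR.sub_left ((Commute.one_left R).smul_left l)).cfcₙ_real _
  have hx₀ : (S - l • 1)⁺ x = 0 := hx
  change ((S - l • 1)⁺ * R) x = 0
  rw [hcomm.eq, mul_apply_eq_comp, hx₀, map_zero]

lemma apply_mem_spectralSublevel (S : G →L[ℂ] G) {l : ℝ} {x : G}
    (hx : x ∈ spectralSublevel S l) : S x ∈ spectralSublevel S l :=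
  map_mem_spectralSublevel_of_commute (Commute.refl S) hx

lemma reApplyInnerSelf_eq_add_posPart_sub_negPart {S : G →L[ℂ] G} (hS : IsSelfAdjoint S) (l : ℝ)
    (x : G) :
    S.reApplyInnerSelf x =
      l * ‖x‖ ^ 2 + (S - l • 1)⁺.reApplyInnerSelf x - (S - l • 1)⁻.reApplyInnerSelf x := by
  have hsplit := CFC.posPart_sub_negPart (S - l • 1)
    (hS.sub ((IsSelfAdjoint.all l).smul (.one _)))
  have hSx : S x = l • x + (S - l • 1)⁺ x - (S - l • 1)⁻ x := by
    rw [add_sub_assoc, ← sub_apply, hsplit]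
    simp
  simp only [reApplyInnerSelf_apply]
  conv_lhs => rw [hSx]
  rw [inner_sub_left, inner_add_left, inner_smul_left_eq_smul, map_sub, map_add, RCLike.smul_re,
    inner_self_eq_norm_sq]

lemma reApplyInnerSelf_le_of_mem_spectralSublevel {S : G →L[ℂ] G} (hS : IsSelfAdjoint S) {l : ℝ}
    {x : G} (hx : x ∈ spectralSublevel S l) : S.reApplyInnerSelf x ≤ l * ‖x‖ ^ 2 := by
  have hpos : (S - l • 1)⁺.reApplyInnerSelf x = 0 := by
    rw [reApplyInnerSelf_apply, show (S - l • 1)⁺ x = 0 from hx]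
    simp
  have hneg := ((nonneg_iff_isPositive _).1 (CFC.negPart_nonneg (S - l • 1))).2 x
  linarith [reApplyInnerSelf_eq_add_posPart_sub_negPart hS l x]

lemma le_reApplyInnerSelf_of_negPart_apply_eq_zero {S : G →L[ℂ] G} (hS : IsSelfAdjoint S) {l : ℝ}
    {x : G} (hx : (S - l • 1)⁻ x = 0) : l * ‖x‖ ^ 2 ≤ S.reApplyInnerSelf x := by
  have hneg : (S - l • 1)⁻.reApplyInnerSelf x = 0 := by simp [reApplyInnerSelf_apply, hx]
  have hpos := ((nonneg_iff_isPositive _).1 (CFC.posPart_nonneg (S - l • 1))).2 x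
  linarith [reApplyInnerSelf_eq_add_posPart_sub_negPart hS l x]

lemma le_reApplyInnerSelf_of_mem_orthogonal_spectralSublevel {S : G →L[ℂ] G}
    (hS : IsSelfAdjoint S) {l : ℝ} {x : G} (hx : x ∈ (spectralSublevel S l)ᗮ) :
    l * ‖x‖ ^ 2 ≤ S.reApplyInnerSelf x := by
  apply le_reApplyInnerSelf_of_negPart_apply_eq_zero hS
  set b := (S - l • 1)⁻
  have hb : b.IsPositive := (nonneg_iff_isPositive b).1 (CFC.negPart_nonneg _)
  have hbb : b (b x) ∈ spectralSublevel S l :=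
    congr($(CFC.posPart_mul_negPart (S - l • 1)) (b x))
  exact inner_self_eq_zero.1 ((hb.isSymmetric (b x) x).symm.trans (hx _ hbb))

lemma spectralSublevel_mono {S : G →L[ℂ] G} (hS : IsSelfAdjoint S) :
    Monotone (spectralSublevel S) := by
  intro l m hlm x hx
  rcases hlm.eq_or_lt with rfl | hlm
  · exact hx
  set a := (S - m • 1)⁺
  have hcomm : Commute S a :=
    (((Commute.refl S).sub_left ((Commute.one_left S).smul_left m)).cfcₙ_real _).symm
  have hle : S.reApplyInnerSelf (a x) ≤ l * ‖a x‖ ^ 2 :=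
    reApplyInnerSelf_le_of_mem_spectralSublevel hS (map_mem_spectralSublevel_of_commute hcomm hx)
  have hge : m * ‖a x‖ ^ 2 ≤ S.reApplyInnerSelf (a x) :=
    le_reApplyInnerSelf_of_negPart_apply_eq_zero hS
      congr($(CFC.negPart_mul_posPart (S - m • 1)) x)
  have hzero : ‖a x‖ ^ 2 = 0 := by nlinarith [sq_nonneg ‖a x‖]
  exact norm_eq_zero.1 (pow_eq_zero_iff two_ne_zero |>.1 hzero)

lemma spectralSublevel_eq_top {S : G →L[ℂ] G} (hS : IsSelfAdjoint S) {l : ℝ} (hl : ‖S‖ < l) :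
    spectralSublevel S l = ⊤ := by
  rw [← Submodule.orthogonal_eq_bot_iff, Submodule.eq_bot_iff]
  intro x hx
  have hge := le_reApplyInnerSelf_of_mem_orthogonal_spectralSublevel hS hx
  have hle : S.reApplyInnerSelf x ≤ ‖S‖ * ‖x‖ ^ 2 := calc
    S.reApplyInnerSelf x ≤ ‖S x‖ * ‖x‖ := re_inner_le_norm _ _
    _ ≤ ‖S‖ * ‖x‖ * ‖x‖ := by gcongr; exact S.le_opNorm x
    _ = ‖S‖ * ‖x‖ ^ 2 := by ring
  have hzero : ‖x‖ ^ 2 = 0 := by nlinarith [sq_nonneg ‖x‖]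
  exact norm_eq_zero.1 (pow_eq_zero_iff two_ne_zero |>.1 hzero)

/-- The spectral subspace of a self-adjoint operator `S` for the interval `(l, m]`. -/
noncomputable def spectralBand (S : G →L[ℂ] G) (l m : ℝ) : Submodule ℂ G :=
  (spectralSublevel S l)ᗮ ⊓ spectralSublevel S m

instance hasOrthogonalProjection_spectralBand (S : G →L[ℂ] G) (l m : ℝ) :
    (spectralBand S l m).HasOrthogonalProjection :=
  have := ((Submodule.isClosed_orthogonal (spectralSublevel S l)).inter
    (isClosed_spectralSublevel S m)).completeSpace_coe
  inferInstanceAs ((spectralSublevel S l)ᗮ ⊓ spectralSublevel S m).HasOrthogonalProjection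

lemma apply_mem_spectralBand {S : G →L[ℂ] G} (hS : IsSelfAdjoint S) {l m : ℝ} {x : G}
    (hx : x ∈ spectralBand S l m) : S x ∈ spectralBand S l m := by
  refine ⟨fun u hu => ?_, apply_mem_spectralSublevel S hx.2⟩
  exact (hS.isSymmetric u x).symm.trans (hx.1 _ (apply_mem_spectralSublevel S hu))

lemma isOrtho_spectralBand {S : G →L[ℂ] G} (hS : IsSelfAdjoint S) {l m l' m' : ℝ}
    (h : m ≤ l') : spectralBand S l m ⟂ spectralBand S l' m' :=
  (Submodule.isOrtho_orthogonal_right _).mono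
    (inf_le_right.trans (spectralSublevel_mono hS h)) inf_le_left

lemma iInf_spectralSublevel_eq_bot {S : G →L[ℂ] G} (hS : IsSelfAdjoint S)
    (hdef : ∀ x, S.reApplyInnerSelf x ≤ 0 → x = 0) {r : ℕ → ℝ} (hr : Tendsto r atTop (𝓝 0)) :
    ⨅ k, spectralSublevel S (r k) = ⊥ := by
  rw [Submodule.eq_bot_iff]
  intro x hx
  rw [Submodule.mem_iInf] at hx
  refine hdef x (ge_of_tendsto' (by simpa using hr.mul_const (‖x‖ ^ 2)) fun k => ?_)
  exact reApplyInnerSelf_le_of_mem_spectralSublevel hS (hx k)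

lemma orthogonal_iSup_spectralBand {S : G →L[ℂ] G} (hS : IsSelfAdjoint S)
    (hdef : ∀ x, S.reApplyInnerSelf x ≤ 0 → x = 0) {r : ℕ → ℝ} (hr : Antitone r)
    (hr₀ : ‖S‖ < r 0) (hlim : Tendsto r atTop (𝓝 0)) :
    (⨆ k, spectralBand S (r (k + 1)) (r k))ᗮ = ⊥ := by
  rw [eq_bot_iff, ← iInf_spectralSublevel_eq_bot hS hdef hlim]
  exact orthogonal_iSup_inf_orthogonal_succ_le_iInf (M := fun k => spectralSublevel S (r k))
    ((spectralSublevel_mono hS).comp_antitone hr) (spectralSublevel_eq_top hS hr₀)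

variable {H : Type*} [NormedAddCommGroup H] [InnerProductSpace ℂ H] [CompleteSpace H]

lemma bounds_of_mem_spectralBand (T : G →L[ℂ] H) {l m C : ℝ} (hl : 0 ≤ l) (hC : 0 ≤ C)
    (hm : m ≤ C ^ 2 * l) {x : G} (hx : x ∈ spectralBand (T.adjoint ∘L T) l m) :
    √l * ‖x‖ ≤ ‖T x‖ ∧ ‖T x‖ ≤ C * (√l * ‖x‖) := by
  have hS : IsSelfAdjoint (T.adjoint ∘L T) := (isPositive_adjoint_comp_self T).isSelfAdjoint
  have hTx : ‖T x‖ ^ 2 = (T.adjoint ∘L T).reApplyInnerSelf x :=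
    apply_norm_sq_eq_inner_adjoint_left T x
  constructor <;> refine le_of_sq_le_sq ?_ (by positivity)
  · rw [mul_pow, Real.sq_sqrt hl, hTx]
    exact le_reApplyInnerSelf_of_mem_orthogonal_spectralSublevel hS hx.1
  · calc ‖T x‖ ^ 2 ≤ m * ‖x‖ ^ 2 :=
          hTx.trans_le (reApplyInnerSelf_le_of_mem_spectralSublevel hS hx.2)
      _ ≤ C ^ 2 * l * ‖x‖ ^ 2 := by gcongr
      _ = (C * (√l * ‖x‖)) ^ 2 := by rw [mul_pow, mul_pow, Real.sq_sqrt hl, mul_assoc]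

lemma hasBoundedDistortion_spectralBand (T : G →L[ℂ] H) {r : ℕ → ℝ} {C : ℝ} (hr : Antitone r)
    (hpos : ∀ k, 0 < r k) (hC : 0 ≤ C) (hratio : ∀ k, r k ≤ C ^ 2 * r (k + 1)) :
    HasBoundedDistortion T C fun k => spectralBand (T.adjoint ∘L T) (r (k + 1)) (r k) where
  pairwise_isOrtho k l hkl := by
    have hS : IsSelfAdjoint (T.adjoint ∘L T) := (isPositive_adjoint_comp_self T).isSelfAdjoint
    rcases hkl.lt_or_gt with h | h
    · exact (isOrtho_spectralBand hS (hr h)).symm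
    · exact isOrtho_spectralBand hS (hr h)
  inner_map_map_eq_zero k x hx y hy := by
    rw [← adjoint_inner_left]
    exact hy _ (apply_mem_spectralBand (isPositive_adjoint_comp_self T).isSelfAdjoint hx)
  exists_bounds k := ⟨√(r (k + 1)), Real.sqrt_pos.2 (hpos _), fun _ hx =>
    bounds_of_mem_spectralBand T (hpos _).le hC (hratio k) hx⟩

theorem exists_hasBoundedDistortion (T : G →L[ℂ] H) (hT : Function.Injective T) :
    ∃ (E : ℕ → Submodule ℂ G) (_ : ∀ k, (E k).HasOrthogonalProjection),
      HasBoundedDistortion T 2 E ∧ (⨆ k, E k)ᗮ = ⊥ := by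
  set S := T.adjoint ∘L T
  have hS : IsSelfAdjoint S := (isPositive_adjoint_comp_self T).isSelfAdjoint
  have hdef : ∀ x, S.reApplyInnerSelf x ≤ 0 → x = 0 := by
    intro x hx
    have hTx : ‖T x‖ ^ 2 ≤ 0 := (apply_norm_sq_eq_inner_adjoint_left T x).trans_le hx
    exact (map_eq_zero_iff T hT).1 (norm_eq_zero.1 (pow_eq_zero_iff two_ne_zero |>.1
      (hTx.antisymm (sq_nonneg _))))
  let r : ℕ → ℝ := fun k => (‖S‖ + 1) * (1 / 4) ^ k
  have hr : Antitone r := fun _ _ hkl =>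
    mul_le_mul_of_nonneg_left (pow_le_pow_of_le_one (by norm_num) (by norm_num) hkl) (by positivity)
  have hlim : Tendsto r atTop (𝓝 0) := by
    simpa [r] using (tendsto_pow_atTop_nhds_zero_of_lt_one (r := (1 / 4 : ℝ)) (by norm_num)
      (by norm_num)).const_mul (‖S‖ + 1)
  refine ⟨fun k => spectralBand S (r (k + 1)) (r k), fun k => inferInstance,
    hasBoundedDistortion_spectralBand T hr (fun k => by positivity) zero_le_two fun k => ?_,
    orthogonal_iSup_spectralBand hS hdef hr (by simp [r]) hlim⟩
  simp only [r, pow_succ]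
  linarith

theorem exists_galerkin_sequence [TopologicalSpace.SeparableSpace H] (T : G →L[ℂ] H)
    (hT : Function.Injective T) :
    ∃ (W : ℕ → Submodule ℂ G) (_ : ∀ n, FiniteDimensional ℂ (W n)),
      Monotone W ∧ (⨆ n, W n).topologicalClosure = ⊤ ∧
      ∀ (x : G) (y : ℕ → G), (∀ n, IsGalerkinApprox T (W n) x (y n)) → Tendsto y atTop (𝓝 x) := by
  obtain ⟨E, _, hE, hEtotal⟩ := exists_hasBoundedDistortion T hT
  have := separableSpace_of_injective_clm hT
  obtain ⟨D, _, hD, hDdense⟩ := exists_monotone_finiteDimensional_dense ℂ G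
  exact ⟨blockSpace E D, fun n => inferInstance, blockSpace_mono hD,
    dense_iSup_blockSpace hD hDdense hEtotal,
    fun _ _ hy => hE.tendsto_of_isGalerkinApprox zero_le_two hEtotal hD hDdense hy⟩

end SpectralBands

section GraphSpace

variable {𝕜 E F : Type*} [RCLike 𝕜] [NormedAddCommGroup E] [InnerProductSpace 𝕜 E]
  [NormedAddCommGroup F] [InnerProductSpace 𝕜 F]

/-- The graph of `A` as a subspace of the Hilbert sum, that is, the domain of `A` with the Hilbert
space structure of the graph norm. -/
noncomputable def graphSpace (A : E →ₗ.[𝕜] F) : Submodule 𝕜 (WithLp 2 (E × F)) :=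
  A.graph.comap (WithLp.linearEquiv 2 𝕜 (E × F)).toLinearMap

namespace graphSpace

variable (A : E →ₗ.[𝕜] F)

/-- The inclusion of the domain of `A`, with its graph norm, into the ambient space. -/
noncomputable def fst : graphSpace A →L[𝕜] E := WithLp.fstL 2 𝕜 E F ∘L (graphSpace A).subtypeL

/-- The operator `A` as a bounded operator on its domain with the graph norm. -/
noncomputable def snd : graphSpace A →L[𝕜] F := WithLp.sndL 2 𝕜 E F ∘L (graphSpace A).subtypeL

variable {A}

lemma completeSpace [CompleteSpace E] [CompleteSpace F] (hA : A.IsClosed) :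
    CompleteSpace (graphSpace A) :=
  (IsClosed.preimage (WithLp.prod_continuous_ofLp 2 E F) hA).completeSpace_coe

lemma fst_mem_domain (x : graphSpace A) : fst A x ∈ A.domain :=
  LinearPMap.mem_domain_of_mem_graph x.2

lemma apply_fst (x : graphSpace A) : A ⟨fst A x, fst_mem_domain x⟩ = snd A x :=
  ((LinearPMap.image_iff (fst_mem_domain x)).2 x.2).symm

lemma exists_fst_eq (f : A.domain) : ∃ x, fst A x = f :=
  ⟨⟨WithLp.toLp 2 ((f : E), A f), A.mem_graph f⟩, rfl⟩

lemma fst_injective : Function.Injective (fst A) := fun x y hxy =>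
  Subtype.ext <| WithLp.ofLp_injective 2 <| Prod.ext hxy <|
  show snd A x = snd A y by simp only [← apply_fst, hxy]

lemma denseRange_fst (hA : Dense (A.domain : Set E)) : DenseRange (fst A) :=
  hA.mono fun f hf => exists_fst_eq ⟨f, hf⟩

end graphSpace
end GraphSpace

section ClosedOperators

variable {E : Type*} [NormedAddCommGroup E] [InnerProductSpace ℂ E] [CompleteSpace E]
  [TopologicalSpace.SeparableSpace E]

theorem exists_finiteDimensional_tendsto_apply_starProjection {F : Type*} [NormedAddCommGroup F]
    [InnerProductSpace ℂ F] [CompleteSpace F] (A : E →ₗ.[ℂ] F) (hclosed : A.IsClosed)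
    (hdense : Dense (A.domain : Set E)) :
    ∃ (V : ℕ → Submodule ℂ E) (_ : ∀ n, FiniteDimensional ℂ (V n)) (hV : ∀ n, V n ≤ A.domain),
      Monotone V ∧ (⨆ n, V n).topologicalClosure = ⊤ ∧
      ∀ f : A.domain, Tendsto
        (fun n => A ⟨(V n).starProjection f, hV n (Submodule.starProjection_apply_mem _ _)⟩)
        atTop (𝓝 (A f)) := by
  have := graphSpace.completeSpace hclosed
  obtain ⟨W, _, hW, hWdense, hWtendsto⟩ :=
    exists_galerkin_sequence (graphSpace.fst A) graphSpace.fst_injective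
  refine ⟨fun n => (W n).map (graphSpace.fst A : graphSpace A →ₗ[ℂ] E), fun n => inferInstance,
    ?_, fun m n hmn => Submodule.map_mono (hW hmn), ?_, fun f => ?_⟩
  · rintro n _ ⟨x, -, rfl⟩
    exact graphSpace.fst_mem_domain x
  · rw [← Submodule.map_iSup]
    exact (graphSpace.denseRange_fst hdense).topologicalClosure_map_submodule hWdense
  · obtain ⟨x, hx⟩ := graphSpace.exists_fst_eq f
    obtain rfl : f = ⟨graphSpace.fst A x, graphSpace.fst_mem_domain x⟩ := Subtype.ext hx.symm
    choose y hy hy_proj using fun n =>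
      IsGalerkinApprox.exists_map_eq_starProjection (graphSpace.fst A) (W n) x
    simp only [← hy_proj, graphSpace.apply_fst]
    exact ((graphSpace.snd A).continuous.tendsto x).comp (hWtendsto x y hy)

theorem exists_finiteRank_projections_general (A : E →ₗ.[ℂ] E) (hclosed : A.IsClosed)
    (hdense : Dense (A.domain : Set E)) :
    ∃ P : ℕ → E →L[ℂ] E,
      (∀ n, IsSelfAdjoint (P n)) ∧ (∀ n, IsIdempotentElem (P n)) ∧
      (∀ n, FiniteDimensional ℂ (LinearMap.range (P n : E →ₗ[ℂ] E))) ∧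
      ∃ hmem : ∀ (n : ℕ) (x : E), P n x ∈ A.domain,
        (∀ f : E, Tendsto (fun n => P n f) atTop (𝓝 f)) ∧
        (∀ f : A.domain,
          Tendsto (fun n => P n (A ⟨P n (f : E), hmem n (f : E)⟩)) atTop (𝓝 (A f))) := by
  obtain ⟨V, _, hV, hVmono, hVdense, hAV⟩ :=
    exists_finiteDimensional_tendsto_apply_starProjection A hclosed hdense
  have hstrong : ∀ f, Tendsto (fun n => (V n).starProjection f) atTop (𝓝 f) := fun f =>
    Submodule.starProjection_tendsto_self V hVmono f hVdense.ge
  refine ⟨fun n => (V n).starProjection, fun n => isSelfAdjoint_starProjection _,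
    fun n => Submodule.isIdempotentElem_starProjection _, fun n => ?_,
    fun n x => hV n (Submodule.starProjection_apply_mem _ x), hstrong, fun f => ?_⟩
  · rw [Submodule.range_starProjection]
    infer_instance
  · exact tendsto_starProjection_apply (hstrong (A f)) (hAV f)

end ClosedOperators

/-- For a self-adjoint operator `A` on a separable Hilbert space there is a sequence of
finite rank orthogonal projections `P n` with `P n → I` strongly, `Ran P n ⊆ Dom A`, and
`P n A P n f → A f` for every `f ∈ Dom A`. -/
theorem exists_finiteRank_projections
    {E : Type*} [NormedAddCommGroup E] [InnerProductSpace ℂ E] [CompleteSpace E]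
    [TopologicalSpace.SeparableSpace E]
    (A : E →ₗ.[ℂ] E) (hA : IsSelfAdjoint A) :
    ∃ P : ℕ → E →L[ℂ] E,
      (∀ n, IsSelfAdjoint (P n)) ∧ (∀ n, IsIdempotentElem (P n)) ∧
      (∀ n, FiniteDimensional ℂ (LinearMap.range ((P n : E →ₗ[ℂ] E)))) ∧
      ∃ hmem : ∀ (n : ℕ) (x : E), P n x ∈ A.domain,
        (∀ f : E, Filter.Tendsto (fun n => P n f) Filter.atTop (nhds f)) ∧
        (∀ f : A.domain,
          Filter.Tendsto (fun n => P n (A ⟨P n (f : E), hmem n (f : E)⟩))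
            Filter.atTop (nhds (A f))) := by
  exact exists_finiteRank_projections_general A hA.isClosed hA.dense_domain
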